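/- Let G be a connected finite simple graph on n vertices, let 1 ≤ k ≤ n−1, set S_1 = {1,…,k}, S_2 = {k+1,…,n}, and for each vertex i let δ_{i,1} and δ_{i,2} denote the number of neighbours of i in S_1 and in S_2 respectively. Let α ∈ (0, π/2) and let θ_1, …, θ_n be a solution of the frustrated Kuramoto model on G such that: θ_i(t) − θ_j(t) → 0 as t → ∞ for all i, j ∈ S_1; θ_p(t) − θ_q(t) → 0 as t → ∞ for all p, q ∈ S_2; and θ_i(t) − θ_p(t) does not converge to 0 for some i ∈ S_1 and p ∈ S_2. Then either (1) the partition S_1 ∪ S_2 is an equitable partition of G, or (2) there exist real scalars μ_1, μ_2 and r such that −δ_{i,1} + μ_1 δ_{i,2} = r for all i ∈ S_1 and −δ_{j,2} + μ_2 δ_{j,1} = r for all j ∈ S_2. -/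

import Mathlib

open scoped Classical

/-- The right-hand side of the frustrated Kuramoto model at vertex `i`, time `t`. -/
noncomputable def kuramotoDeriv {n : ℕ} (G : SimpleGraph (Fin n)) (α : ℝ)
    (θ : Fin n → ℝ → ℝ) (i : Fin n) (t : ℝ) : ℝ :=
  ∑ j : Fin n, if G.Adj i j then Real.sin (θ j t - θ i t - α) else 0

/-- `θ` is a solution of the frustrated Kuramoto model on `G` with frustration `α`. -/
def IsKuramotoSol {n : ℕ} (G : SimpleGraph (Fin n)) (α : ℝ)
    (θ : Fin n → ℝ → ℝ) : Prop :=
  ∀ i : Fin n, ∀ t ∈ Set.Ici (0 : ℝ),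
    HasDerivWithinAt (θ i) (kuramotoDeriv G α θ i t) (Set.Ici 0) t

/-- `δ_{i,1}`: the number of neighbours of `i` lying in `S₁ = {0, …, k-1}`. -/
noncomputable def deg1 {n : ℕ} (G : SimpleGraph (Fin n)) (k : ℕ) (i : Fin n) : ℕ :=
  (Finset.univ.filter fun j : Fin n => G.Adj i j ∧ (j : ℕ) < k).card

/-- `δ_{i,2}`: the number of neighbours of `i` lying in `S₂ = {k, …, n-1}`. -/
noncomputable def deg2 {n : ℕ} (G : SimpleGraph (Fin n)) (k : ℕ) (i : Fin n) : ℕ :=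
  (Finset.univ.filter fun j : Fin n => G.Adj i j ∧ k ≤ (j : ℕ)).card

open Filter Topology

lemma km_sin_lip (x y : ℝ) : |Real.sin x - Real.sin y| ≤ |x - y| := by
  have := Real.abs_sin_sub_sin_le x y
  exact this

lemma km_mvt (g f : ℝ → ℝ) (hg : ∀ t ∈ Set.Ici (0:ℝ), HasDerivWithinAt g (f t) (Set.Ici 0) t)
    (a b : ℝ) (ha : 0 ≤ a) (hab : a < b) : ∃ c ∈ Set.Ioo a b, f c = (g b - g a) / (b - a) := by
  apply exists_hasDerivAt_eq_slope g f hab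
  · intro t ht
    exact ((hg t (ha.trans ht.1)).continuousWithinAt).mono
      (fun s hs => ha.trans hs.1)
  · intro t ht
    exact (hg t (ha.trans ht.1.le)).hasDerivAt (Ici_mem_nhds (lt_of_le_of_lt ha ht.1))

lemma km_barbalat (g f : ℝ → ℝ) (L : ℝ) (hL : 0 ≤ L)
    (hg : ∀ t ∈ Set.Ici (0:ℝ), HasDerivWithinAt g (f t) (Set.Ici 0) t)
    (hf : ∀ s t : ℝ, 0 ≤ s → 0 ≤ t → |f s - f t| ≤ L * |s - t|)
    (h0 : Tendsto g atTop (𝓝 0)) : Tendsto f atTop (𝓝 0) := by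
  rw [Metric.tendsto_atTop] at h0 ⊢
  intro ε hε
  set h : ℝ := ε / (2 * (L + 1)) with hh
  have hpos : 0 < h := by positivity
  have hLh : L * h ≤ ε / 2 := by
    rw [hh, ← mul_div_assoc, div_le_div_iff₀ (by positivity) (by norm_num)]
    nlinarith
  obtain ⟨N, hN⟩ := h0 (h * (ε / 4)) (by positivity)
  refine ⟨max N 0, fun t ht => ?_⟩
  have ht0 : 0 ≤ t := (le_max_right _ _).trans ht
  have htN : N ≤ t := (le_max_left _ _).trans ht
  obtain ⟨c, hc, hfc⟩ := km_mvt g f hg t (t + h) ht0 (by linarith)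
  have e1 := hN t htN
  have e2 := hN (t + h) (by linarith)
  have e3 := hf t c ht0 (ht0.trans hc.1.le)
  rw [Real.dist_eq, sub_zero] at e1 e2 ⊢
  have e4 : |t - c| ≤ h := by rw [abs_le]; constructor <;> linarith [hc.1, hc.2]
  have e5 : |f t - f c| ≤ ε / 2 := e3.trans ((mul_le_mul_of_nonneg_left e4 hL).trans hLh)
  have e6 : |f c| < ε / 2 := by
    rw [hfc, add_sub_cancel_left, abs_div, abs_of_pos hpos, div_lt_iff₀ hpos]
    have := abs_sub (g (t + h)) (g t)
    linarith
  have e7 := abs_sub_abs_le_abs_sub (f t) (f c)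
  linarith

section
variable {n : ℕ} (G : SimpleGraph (Fin n)) (α : ℝ) (θ : Fin n → ℝ → ℝ)

lemma km_bound (i : Fin n) (t : ℝ) : |kuramotoDeriv G α θ i t| ≤ n := by
  unfold kuramotoDeriv
  refine (Finset.abs_sum_le_sum_abs _ _).trans ?_
  have : ∀ j ∈ (Finset.univ : Finset (Fin n)),
      |if G.Adj i j then Real.sin (θ j t - θ i t - α) else 0| ≤ 1 := by
    intro j _
    split_ifs
    · exact Real.abs_sin_le_one _
    · simp
  simpa using Finset.sum_le_sum this

lemma km_lip1 (hθ : IsKuramotoSol G α θ) (i : Fin n) (s t : ℝ) (hs : 0 ≤ s) (ht : 0 ≤ t) :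
    |θ i s - θ i t| ≤ n * |s - t| :=
  (convex_Ici (0:ℝ)).norm_image_sub_le_of_norm_hasDerivWithin_le
    (fun x hx => hθ i x hx) (fun x _ => km_bound G α θ i x) ht hs

lemma km_lip2 (hθ : IsKuramotoSol G α θ) (i : Fin n) (s t : ℝ) (hs : 0 ≤ s) (ht : 0 ≤ t) :
    |kuramotoDeriv G α θ i s - kuramotoDeriv G α θ i t| ≤ (n * (2 * n)) * |s - t| := by
  unfold kuramotoDeriv
  rw [← Finset.sum_sub_distrib]
  refine (Finset.abs_sum_le_sum_abs _ _).trans ?_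
  have : ∀ j ∈ (Finset.univ : Finset (Fin n)),
      |(if G.Adj i j then Real.sin (θ j s - θ i s - α) else 0) -
        (if G.Adj i j then Real.sin (θ j t - θ i t - α) else 0)| ≤ (2 * n) * |s - t| := by
    intro j _
    split_ifs
    · refine (km_sin_lip _ _).trans ?_
      have a := km_lip1 G α θ hθ i s t hs ht
      have b := km_lip1 G α θ hθ j s t hs ht
      have : θ j s - θ i s - α - (θ j t - θ i t - α) = (θ j s - θ j t) - (θ i s - θ i t) := by ring
      rw [this]
      have := abs_sub (θ j s - θ j t) (θ i s - θ i t)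
      linarith
    · simp; positivity
  have := Finset.sum_le_sum this
  simp only [Finset.sum_const, Finset.card_univ, Fintype.card_fin, nsmul_eq_mul] at this
  linarith

lemma km_diff (hθ : IsKuramotoSol G α θ) (i j : Fin n)
    (h : Tendsto (fun t => θ i t - θ j t) atTop (𝓝 0)) :
    Tendsto (fun t => kuramotoDeriv G α θ i t - kuramotoDeriv G α θ j t) atTop (𝓝 0) := by
  refine km_barbalat _ _ (2 * (n * (2 * n))) (by positivity)
    (fun t ht => (hθ i t ht).sub (hθ j t ht)) ?_ h
  intro s t hs ht
  have a := km_lip2 G α θ hθ i s t hs ht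
  have b := km_lip2 G α θ hθ j s t hs ht
  have e := abs_sub (kuramotoDeriv G α θ i s - kuramotoDeriv G α θ i t)
    (kuramotoDeriv G α θ j s - kuramotoDeriv G α θ j t)
  have : kuramotoDeriv G α θ i s - kuramotoDeriv G α θ j s -
      (kuramotoDeriv G α θ i t - kuramotoDeriv G α θ j t) =
      (kuramotoDeriv G α θ i s - kuramotoDeriv G α θ i t) -
    (kuramotoDeriv G α θ j s - kuramotoDeriv G α θ j t) := by ring
  rw [this]
  linarith

lemma km_sum (k : ℕ) (i : Fin n) (a b : ℝ) :
    (∑ j : Fin n, if G.Adj i j then (if (j:ℕ) < k then a else b) else 0) =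
      deg1 G k i * a + deg2 G k i * b := by
  unfold deg1 deg2
  rw [Finset.card_filter, Finset.card_filter]
  push_cast
  rw [Finset.sum_mul, Finset.sum_mul, ← Finset.sum_add_distrib]
  refine Finset.sum_congr rfl fun j _ => ?_
  by_cases h : G.Adj i j <;> by_cases h' : (j:ℕ) < k
  · simp [h, h']
  · simp [h, h', not_lt.mp h']
  · simp [h]
  · simp [h]

/-- approximation -/
lemma km_approx (k : ℕ) (x : Fin n → ℝ → ℝ) (x1 x2 : ℝ → ℝ)
    (hx : ∀ j t, x j t = if (j:ℕ) < k then x1 t else x2 t)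
    (h : ∀ j, Tendsto (fun t => θ j t - x j t) atTop (𝓝 0)) (i : Fin n) :
    Tendsto (fun t => kuramotoDeriv G α θ i t -
      (deg1 G k i * Real.sin (x1 t - x i t - α) + deg2 G k i * Real.sin (x2 t - x i t - α)))
      atTop (𝓝 0) := by
  have : ∀ t, kuramotoDeriv G α θ i t -
      (deg1 G k i * Real.sin (x1 t - x i t - α) + deg2 G k i * Real.sin (x2 t - x i t - α)) =
      ∑ j : Fin n, ((if G.Adj i j then Real.sin (θ j t - θ i t - α) else 0) -
        (if G.Adj i j then Real.sin (x j t - x i t - α) else 0)) := by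
    intro t
    rw [← km_sum, Finset.sum_sub_distrib]
    unfold kuramotoDeriv
    congr 1
    refine Finset.sum_congr rfl fun j _ => ?_
    rw [hx j]
    split_ifs <;> rfl
  simp_rw [this]
  rw [show (0:ℝ) = ∑ j : Fin n, (0:ℝ) by simp]
  refine tendsto_finsetSum _ fun j _ => ?_
  by_cases hA : G.Adj i j
  · simp only [hA, if_true]
    have e : Tendsto (fun t => |(θ j t - x j t) - (θ i t - x i t)|) atTop (𝓝 0) := by
      simpa using ((h j).sub (h i)).abs
    refine squeeze_zero_norm (fun t => ?_) e
    refine (km_sin_lip _ _).trans (le_of_eq ?_)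
    congr 1; ring
  · simp [hA]

end

/-- unbounded continuous functions hit every residue mod 2π at late times -/
lemma km_hit (φ : ℝ → ℝ) (hc : ContinuousOn φ (Set.Ici 0))
    (hu : ∀ M : ℝ, ∃ t, 0 ≤ t ∧ M < |φ t|) (β T : ℝ) :
    ∃ t, T ≤ t ∧ ∃ m : ℤ, φ t = β + m * (2 * Real.pi) := by
  set T' := max T 0
  have hT' : 0 ≤ T' := le_max_right _ _
  obtain ⟨M, hM⟩ := (isCompact_Icc (a := (0:ℝ)) (b := T')).exists_bound_of_continuousOn
    (hc.mono (fun s hs => hs.1))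
  simp only [Real.norm_eq_abs] at hM
  have hπ := Real.pi_pos
  obtain ⟨t, ht0, ht⟩ := hu (M + 2 * Real.pi)
  have htT : T' ≤ t := by
    by_contra hlt
    have := hM t ⟨ht0, (not_le.mp hlt).le⟩
    linarith
  have hMT := hM T' ⟨hT', le_rfl⟩
  have key : ∃ m : ℤ, β + m * (2 * Real.pi) ∈ Set.uIcc (φ T') (φ t) := by
    have hl : ∀ a : ℝ, ∃ m : ℤ, a ≤ β + m * (2 * Real.pi) ∧ β + m * (2 * Real.pi) ≤ a + 2 * Real.pi := by
      intro a
      refine ⟨⌈(a - β) / (2 * Real.pi)⌉, ?_, ?_⟩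
      · have := Int.le_ceil ((a - β) / (2 * Real.pi))
        rw [div_le_iff₀ (by positivity)] at this
        linarith
      · have := (Int.ceil_lt_add_one ((a - β) / (2 * Real.pi))).le
        have := mul_le_mul_of_nonneg_right this (by positivity : 0 ≤ 2 * Real.pi)
        rw [add_mul, div_mul_cancel₀ _ (by positivity)] at this
        linarith
    rw [abs_le] at hMT
    rcases lt_abs.mp ht with h | h
    · obtain ⟨m, h1, h2⟩ := hl (φ T')
      exact ⟨m, Set.mem_uIcc.mpr (Or.inl ⟨h1, by linarith⟩)⟩
    · obtain ⟨m, h1, h2⟩ := hl (φ t)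
      exact ⟨m, Set.mem_uIcc.mpr (Or.inr ⟨h1, by linarith⟩)⟩
  obtain ⟨m, hm⟩ := key
  have hcc : ContinuousOn φ (Set.uIcc T' t) := by
    rw [Set.uIcc_of_le htT]
    exact hc.mono (fun s hs => hT'.trans hs.1)
  obtain ⟨s, hs, hse⟩ := intermediate_value_uIcc hcc hm
  rw [Set.uIcc_of_le htT] at hs
  exact ⟨s, (le_max_left _ _).trans hs.1, m, hse⟩

/-- if φ is unbounded, a limiting relation forces both coefficients to vanish -/
lemma km_coeff (ψ : ℝ → ℝ) (hc : ContinuousOn ψ (Set.Ici 0))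
    (hu : ∀ M : ℝ, ∃ t, 0 ≤ t ∧ M < |ψ t|) (α A B : ℝ) (hs : 0 < Real.sin α)
    (h : Tendsto (fun t => A * Real.sin (-α) + B * Real.sin (ψ t - α)) atTop (𝓝 0)) :
    A = 0 ∧ B = 0 := by
  have key : ∀ γ : ℝ, A * Real.sin (-α) + B * Real.sin γ = 0 := by
    intro γ
    by_contra hne
    rw [Metric.tendsto_atTop] at h
    obtain ⟨T, hT⟩ := h _ (abs_pos.mpr hne)
    obtain ⟨t, ht, m, hm⟩ := km_hit ψ hc hu (γ + α) T
    have := hT t ht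
    rw [hm, show γ + α + m * (2 * Real.pi) - α = γ + m * (2 * Real.pi) by ring,
      Real.sin_add_int_mul_two_pi, Real.dist_eq, sub_zero] at this
    exact lt_irrefl _ this
  have a := key 0
  have b := key (Real.pi / 2)
  simp only [Real.sin_zero, Real.sin_pi_div_two, Real.sin_neg] at a b
  have hA : A * Real.sin α = 0 := by linarith
  exact ⟨(mul_eq_zero.mp hA).resolve_right hs.ne', by linarith⟩

/-- **Theorem (α-Kuramoto bipartitions).** Suppose `θ` solves the frustrated Kuramoto
model, the phases synchronise asymptotically within each of `S₁ = {0,…,k-1}` and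
`S₂ = {k,…,n-1}`, but not between the two parts. Then either the bipartition is
equitable, or there are scalars `μ₁, μ₂, r` with `-δ_{i,1} + μ₁ δ_{i,2} = r` for all
`i ∈ S₁` and `-δ_{j,2} + μ₂ δ_{j,1} = r` for all `j ∈ S₂`. -/
theorem kuramoto_bipartition {n : ℕ} (G : SimpleGraph (Fin n)) (hconn : G.Connected)
    (k : ℕ) (hk1 : 1 ≤ k) (hk2 : k ≤ n - 1)
    (α : ℝ) (hα : α ∈ Set.Ioo 0 (Real.pi / 2))
    (θ : Fin n → ℝ → ℝ) (hθ : IsKuramotoSol G α θ)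
    (h1 : ∀ i j : Fin n, (i : ℕ) < k → (j : ℕ) < k →
      Filter.Tendsto (fun t => θ i t - θ j t) Filter.atTop (nhds 0))
    (h2 : ∀ p q : Fin n, k ≤ (p : ℕ) → k ≤ (q : ℕ) →
      Filter.Tendsto (fun t => θ p t - θ q t) Filter.atTop (nhds 0))
    (h3 : ∃ i p : Fin n, (i : ℕ) < k ∧ k ≤ (p : ℕ) ∧
      ¬ Filter.Tendsto (fun t => θ i t - θ p t) Filter.atTop (nhds 0)) :
    (∀ u v : Fin n, (((u : ℕ) < k ∧ (v : ℕ) < k) ∨ (k ≤ (u : ℕ) ∧ k ≤ (v : ℕ))) →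
        deg1 G k u = deg1 G k v ∧ deg2 G k u = deg2 G k v) ∨
    (∃ μ₁ μ₂ r : ℝ,
      (∀ i : Fin n, (i : ℕ) < k → -(deg1 G k i : ℝ) + μ₁ * (deg2 G k i : ℝ) = r) ∧
      (∀ j : Fin n, k ≤ (j : ℕ) → -(deg2 G k j : ℝ) + μ₂ * (deg1 G k j : ℝ) = r)) := by
  have hs : 0 < Real.sin α := Real.sin_pos_of_pos_of_lt_pi hα.1 (by linarith [hα.2, Real.pi_pos])
  obtain ⟨i0, p0, hi0, hp0, -⟩ := h3
  set x : Fin n → ℝ → ℝ := fun j t => if (j:ℕ) < k then θ i0 t else θ p0 t with hxdef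
  have hx : ∀ j t, x j t = if (j:ℕ) < k then θ i0 t else θ p0 t := fun _ _ => rfl
  have hx0 : ∀ j, Tendsto (fun t => θ j t - x j t) atTop (𝓝 0) := by
    intro j
    by_cases hj : (j:ℕ) < k
    · simpa only [hx, hj, if_true] using h1 j i0 hj hi0
    · simpa only [hx, hj, if_false] using h2 j p0 (not_lt.mp hj) hp0
  have happ := km_approx G α θ k x (θ i0) (θ p0) hx hx0
  have app1 : ∀ i : Fin n, (i:ℕ) < k → Tendsto (fun t => kuramotoDeriv G α θ i t -
      (deg1 G k i * Real.sin (-α) + deg2 G k i * Real.sin ((θ p0 t - θ i0 t) - α))) atTop (𝓝 0) := by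
    intro i hi
    have := happ i
    simpa only [hx, hi, if_true, sub_self, zero_sub] using this
  have app2 : ∀ i : Fin n, k ≤ (i:ℕ) → Tendsto (fun t => kuramotoDeriv G α θ i t -
      (deg2 G k i * Real.sin (-α) + deg1 G k i * Real.sin ((θ i0 t - θ p0 t) - α))) atTop (𝓝 0) := by
    intro i hi
    have := happ i
    simp only [hx, not_lt.mpr hi, if_false, sub_self, zero_sub] at this
    refine this.congr fun t => ?_
    ring
  have d1 : ∀ i j : Fin n, (i:ℕ) < k → (j:ℕ) < k → Tendsto (fun t =>
      kuramotoDeriv G α θ i t - kuramotoDeriv G α θ j t) atTop (𝓝 0) :=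
    fun i j hi hj => km_diff G α θ hθ i j (h1 i j hi hj)
  have d2 : ∀ i j : Fin n, k ≤ (i:ℕ) → k ≤ (j:ℕ) → Tendsto (fun t =>
      kuramotoDeriv G α θ i t - kuramotoDeriv G α θ j t) atTop (𝓝 0) :=
    fun i j hi hj => km_diff G α θ hθ i j (h2 i j hi hj)
  have hcont : ∀ i, ContinuousOn (θ i) (Set.Ici 0) := fun i t ht => (hθ i t ht).continuousWithinAt
  by_cases hb : ∃ M : ℝ, ∀ t, 0 ≤ t → |θ p0 t - θ i0 t| ≤ M
  · right
    obtain ⟨M, hM⟩ := hb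
    have hseq : ∀ m : ℕ, ∃ t : ℝ, (m:ℝ) ≤ t ∧
        |kuramotoDeriv G α θ p0 t - kuramotoDeriv G α θ i0 t| ≤ (2 * M) * (1 / ((m:ℝ) + 1)) := by
      intro m
      have hm : (0:ℝ) ≤ m := Nat.cast_nonneg m
      obtain ⟨c, hc, he⟩ := km_mvt (fun t => θ p0 t - θ i0 t)
        (fun t => kuramotoDeriv G α θ p0 t - kuramotoDeriv G α θ i0 t)
        (fun t ht => (hθ p0 t ht).sub (hθ i0 t ht)) m (m + (m + 1)) hm (by linarith)
      refine ⟨c, hc.1.le, ?_⟩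
      rw [he, add_sub_cancel_left, abs_div, abs_of_pos (by linarith : (0:ℝ) < m + 1), div_eq_mul_one_div]
      refine mul_le_mul_of_nonneg_right ?_ (by positivity)
      have a := hM m hm
      have b := hM (m + (m + 1)) (by linarith)
      have := abs_sub (θ p0 (m + (m + 1)) - θ i0 (m + (m + 1))) (θ p0 m - θ i0 m)
      linarith
    choose τ hτ1 hτ2 using hseq
    obtain ⟨φ, -, σ, hσ, hφ⟩ := (isCompact_Icc (a := -M) (b := M)).tendsto_subseq
      (x := fun m => θ p0 (τ m) - θ i0 (τ m))
      (fun m => abs_le.mp (hM _ ((Nat.cast_nonneg m).trans (hτ1 m))))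
    have hτ : Tendsto τ atTop atTop := tendsto_atTop_mono hτ1 tendsto_natCast_atTop_atTop
    have hτσ : Tendsto (fun m => τ (σ m)) atTop atTop := hτ.comp hσ.tendsto_atTop
    have hd : Tendsto (fun m => kuramotoDeriv G α θ p0 (τ (σ m)) -
        kuramotoDeriv G α θ i0 (τ (σ m))) atTop (𝓝 0) := by
      have : Tendsto (fun m => kuramotoDeriv G α θ p0 (τ m) -
        kuramotoDeriv G α θ i0 (τ m)) atTop (𝓝 0) := by
        refine squeeze_zero_norm hτ2 ?_
        simpa using (tendsto_one_div_add_atTop_nhds_zero_nat (𝕜 := ℝ)).const_mul (2 * M)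
      exact this.comp hσ.tendsto_atTop
    have hφ' : Tendsto (fun m => θ p0 (τ (σ m)) - θ i0 (τ (σ m))) atTop (𝓝 φ) := hφ
    have hφ'' : Tendsto (fun m => θ i0 (τ (σ m)) - θ p0 (τ (σ m))) atTop (𝓝 (-φ)) :=
      hφ'.neg.congr fun m => by ring
    have l1 : ∀ i : Fin n, (i:ℕ) < k → Tendsto (fun m => kuramotoDeriv G α θ i (τ (σ m))) atTop
        (𝓝 (deg1 G k i * Real.sin (-α) + deg2 G k i * Real.sin (φ - α))) := by
      intro i hi
      have a := (app1 i hi).comp hτσ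
      have b := (((Real.continuous_sin.tendsto _).comp (hφ'.sub_const α)).const_mul
        (deg2 G k i : ℝ)).const_add (deg1 G k i * Real.sin (-α))
      have := a.add b
      rw [zero_add] at this
      refine this.congr fun m => ?_
      simp only [Function.comp]; ring
    have l2 : ∀ i : Fin n, k ≤ (i:ℕ) → Tendsto (fun m => kuramotoDeriv G α θ i (τ (σ m))) atTop
        (𝓝 (deg2 G k i * Real.sin (-α) + deg1 G k i * Real.sin (-φ - α))) := by
      intro i hi
      have a := (app2 i hi).comp hτσ
      have b := (((Real.continuous_sin.tendsto _).comp (hφ''.sub_const α)).const_mul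
        (deg1 G k i : ℝ)).const_add (deg2 G k i * Real.sin (-α))
      have := a.add b
      rw [zero_add] at this
      refine this.congr fun m => ?_
      simp only [Function.comp]; ring
    have e0 := tendsto_nhds_unique hd ((l2 p0 hp0).sub (l1 i0 hi0))
    refine ⟨Real.sin (φ - α) / Real.sin α, Real.sin (-φ - α) / Real.sin α,
      -(deg1 G k i0 : ℝ) + Real.sin (φ - α) / Real.sin α * (deg2 G k i0 : ℝ), ?_, ?_⟩
    · intro i hi
      have e := tendsto_nhds_unique ((d1 i i0 hi hi0).comp hτσ) ((l1 i hi).sub (l1 i0 hi0))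
      simp only [Real.sin_neg] at e
      field_simp
      linarith
    · intro j hj
      have e := tendsto_nhds_unique ((d2 j p0 hj hp0).comp hτσ) ((l2 j hj).sub (l2 p0 hp0))
      simp only [Real.sin_neg] at e e0
      field_simp
      linarith
  · left
    push Not at hb
    have u1 : ∀ u v : Fin n, (u:ℕ) < k → (v:ℕ) < k →
        deg1 G k u = deg1 G k v ∧ deg2 G k u = deg2 G k v := by
      intro u v hu hv
      have := ((d1 u v hu hv).sub (app1 u hu)).add (app1 v hv)
      obtain ⟨a, b⟩ := km_coeff (fun t => θ p0 t - θ i0 t) ((hcont p0).sub (hcont i0)) hb α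
        ((deg1 G k u : ℝ) - deg1 G k v) ((deg2 G k u : ℝ) - deg2 G k v) hs (by
          simp only [sub_zero, add_zero] at this
          refine this.congr fun t => ?_
          ring)
      exact ⟨by exact_mod_cast sub_eq_zero.mp a, by exact_mod_cast sub_eq_zero.mp b⟩
    have u2 : ∀ u v : Fin n, k ≤ (u:ℕ) → k ≤ (v:ℕ) →
        deg1 G k u = deg1 G k v ∧ deg2 G k u = deg2 G k v := by
      intro u v hu hv
      have := ((d2 u v hu hv).sub (app2 u hu)).add (app2 v hv)
      obtain ⟨a, b⟩ := km_coeff (fun t => θ i0 t - θ p0 t) ((hcont i0).sub (hcont p0))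
        (fun M => by simpa only [abs_sub_comm] using hb M) α
        ((deg2 G k u : ℝ) - deg2 G k v) ((deg1 G k u : ℝ) - deg1 G k v) hs (by
          simp only [sub_zero, add_zero] at this
          refine this.congr fun t => ?_
          ring)
      exact ⟨by exact_mod_cast sub_eq_zero.mp b, by exact_mod_cast sub_eq_zero.mp a⟩
    rintro u v (⟨hu, hv⟩ | ⟨hu, hv⟩)
    · exact u1 u v hu hv
    · exact u2 u v hu hv
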